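/- arXiv:2307.15564 — 2 statements merged into one kernel-verified Lean document; each statement's English description precedes it below -/
import Mathlib

section
/- Let U ⊆ ℝⁿ be open with coordinates x = (x¹,…,xⁿ), let g₁,…,gₙ, K₁,…,Kₙ : U → ℝ be smooth, and let ε₁,…,εₙ ∈ {−1,1}. Define H(x,p) = (1/2)·Σᵢ εᵢ·exp(gᵢ(x))·pᵢ² and F(x,p) = Σᵢ εᵢ·exp(gᵢ(x))·Kᵢ(x)·pᵢ². If {H,F}(x,p) = 0 for all (x,p) ∈ U × ℝⁿ, then for every index i the weak nonlinearity condition holds: (∂Kᵢ/∂xⁱ)(x) = 0 for all x ∈ U. -/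
open scoped BigOperators

/-- Partial derivative of `f : ℝⁿ → ℝ` in the `j`-th coordinate direction. -/
noncomputable def pd {n : ℕ} (f : (Fin n → ℝ) → ℝ) (j : Fin n) (x : Fin n → ℝ) : ℝ :=
  fderiv ℝ f x (Pi.single j 1)

/-- The canonical Poisson bracket of two functions on `ℝⁿ × ℝⁿ` (positions `x`, momenta `p`):
`{H,F} = Σ_s (∂H/∂p_s · ∂F/∂x^s − ∂H/∂x^s · ∂F/∂p_s)`. -/
noncomputable def poisson {n : ℕ} (H F : ((Fin n → ℝ) × (Fin n → ℝ)) → ℝ)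
    (q : (Fin n → ℝ) × (Fin n → ℝ)) : ℝ :=
  ∑ s : Fin n,
    (fderiv ℝ H q ((0 : Fin n → ℝ), Pi.single s 1) * fderiv ℝ F q (Pi.single s 1, (0 : Fin n → ℝ))
      - fderiv ℝ H q (Pi.single s 1, (0 : Fin n → ℝ)) *
          fderiv ℝ F q ((0 : Fin n → ℝ), Pi.single s 1))

/-!
For fiberwise diagonal quadratic functions `∑ⱼ aⱼ pⱼ²` and `∑ⱼ bⱼ pⱼ²`, the Poisson bracket is a
cubic polynomial in the momenta whose `pᵢ³` coefficient is twice the Wronskian `aᵢ ∂ᵢbᵢ - bᵢ ∂ᵢaᵢ`.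
For `bᵢ = aᵢ Kᵢ` this Wronskian is `aᵢ² ∂ᵢKᵢ`. Evaluating at the momentum `p = eᵢ` isolates the
coefficient, so a vanishing bracket forces `∂ᵢKᵢ = 0` wherever `aᵢ ≠ 0`.
-/

section DiagonalQuadratic

variable {𝕜 E ι : Type*} [Fintype ι]

/-- The function `(x, p) ↦ ∑ᵢ aᵢ(x) pᵢ²`, quadratic and diagonal in the momenta `p`, with
coefficients depending on the position `x`. Kinetic energies and quadratic integrals in orthogonal
coordinates have this form. -/
def diagonalQuadratic [CommSemiring 𝕜] (a : ι → E → 𝕜) (q : E × (ι → 𝕜)) : 𝕜 :=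
  ∑ i, a i q.1 * q.2 i ^ 2

variable [NontriviallyNormedField 𝕜] [NormedAddCommGroup E] [NormedSpace 𝕜 E]
  {a : ι → E → 𝕜} {x : E}

theorem hasFDerivAt_diagonalQuadratic {a' : ι → E →L[𝕜] 𝕜} (ha : ∀ i, HasFDerivAt (a i) (a' i) x)
    (p : ι → 𝕜) :
    HasFDerivAt (diagonalQuadratic a)
      (∑ i, (p i ^ 2 • (a' i).comp (.fst 𝕜 E (ι → 𝕜)) +
        (2 * a i x * p i) • (ContinuousLinearMap.proj i).comp (.snd 𝕜 E (ι → 𝕜)))) (x, p) := by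
  refine HasFDerivAt.fun_sum fun i _ => ?_
  have hcoeff : HasFDerivAt (fun q : E × (ι → 𝕜) => a i q.1)
      ((a' i).comp (.fst 𝕜 E (ι → 𝕜))) (x, p) :=
    HasFDerivAt.comp (x, p) (ha i) hasFDerivAt_fst
  have hmomentum : HasFDerivAt (fun q : E × (ι → 𝕜) => q.2 i)
      ((ContinuousLinearMap.proj i).comp (.snd 𝕜 E (ι → 𝕜))) (x, p) :=
    ((ContinuousLinearMap.proj i).comp (.snd 𝕜 E (ι → 𝕜))).hasFDerivAt
  refine (hcoeff.mul (hmomentum.pow 2)).congr_fderiv ?_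
  ext
  · simp
  · simp [mul_assoc, mul_left_comm]

theorem fderiv_diagonalQuadratic_position (ha : ∀ i, DifferentiableAt 𝕜 (a i) x) (p : ι → 𝕜)
    (v : E) :
    fderiv 𝕜 (diagonalQuadratic a) (x, p) (v, 0) = ∑ i, p i ^ 2 * fderiv 𝕜 (a i) x v := by
  rw [(hasFDerivAt_diagonalQuadratic (fun i => (ha i).hasFDerivAt) p).fderiv]
  simp

theorem fderiv_diagonalQuadratic_momentum [DecidableEq ι]
    (ha : ∀ i, DifferentiableAt 𝕜 (a i) x) (p : ι → 𝕜) (s : ι) :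
    fderiv 𝕜 (diagonalQuadratic a) (x, p) (0, Pi.single s 1) = 2 * a s x * p s := by
  rw [(hasFDerivAt_diagonalQuadratic (fun i => (ha i).hasFDerivAt) p).fderiv]
  simp [Pi.single_apply]

end DiagonalQuadratic

section PoissonBracket

variable {n : ℕ}

theorem pd_mul {f g : (Fin n → ℝ) → ℝ} {x : Fin n → ℝ} (hf : DifferentiableAt ℝ f x)
    (hg : DifferentiableAt ℝ g x) (j : Fin n) :
    pd (fun y => f y * g y) j x = f x * pd g j x + g x * pd f j x := by
  simp [pd, fderiv_fun_mul hf hg]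

theorem poisson_const_mul_left (c : ℝ) (H F : (Fin n → ℝ) × (Fin n → ℝ) → ℝ)
    (q : (Fin n → ℝ) × (Fin n → ℝ)) :
    poisson (fun r => c * H r) F q = c * poisson H F q := by
  have hderiv : fderiv ℝ (fun r => c * H r) q = c • fderiv ℝ H q :=
    congrFun (fderiv_const_smul_field c) q
  simp only [poisson, hderiv, smul_apply, smul_eq_mul, Finset.mul_sum]
  exact Finset.sum_congr rfl fun s _ => by ring

variable {a b : Fin n → (Fin n → ℝ) → ℝ} {x : Fin n → ℝ}

theorem poisson_diagonalQuadratic (ha : ∀ j, DifferentiableAt ℝ (a j) x)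
    (hb : ∀ j, DifferentiableAt ℝ (b j) x) (p : Fin n → ℝ) :
    poisson (diagonalQuadratic a) (diagonalQuadratic b) (x, p) =
      2 * ∑ s, ∑ j, p s * p j ^ 2 * (a s x * pd (b j) s x - b s x * pd (a j) s x) := by
  simp only [poisson, fderiv_diagonalQuadratic_position ha, fderiv_diagonalQuadratic_position hb,
    fderiv_diagonalQuadratic_momentum ha, fderiv_diagonalQuadratic_momentum hb, Finset.mul_sum,
    Finset.sum_mul, ← Finset.sum_sub_distrib, pd]
  exact Finset.sum_congr rfl fun s _ => Finset.sum_congr rfl fun j _ => by ring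

theorem poisson_diagonalQuadratic_single (ha : ∀ j, DifferentiableAt ℝ (a j) x)
    (hb : ∀ j, DifferentiableAt ℝ (b j) x) (i : Fin n) :
    poisson (diagonalQuadratic a) (diagonalQuadratic b) (x, Pi.single i 1) =
      2 * (a i x * pd (b i) i x - b i x * pd (a i) i x) := by
  rw [poisson_diagonalQuadratic ha hb]
  simp [Pi.single_apply]

end PoissonBracket

theorem weak_nonlinearity_of_poisson_commute_general {n : ℕ} {a K : Fin n → (Fin n → ℝ) → ℝ}
    {x : Fin n → ℝ} {i : Fin n} (ha : ∀ j, DifferentiableAt ℝ (a j) x)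
    (hK : ∀ j, DifferentiableAt ℝ (K j) x) (hai : a i x ≠ 0)
    (hbracket : poisson (fun q => (1 / 2 : ℝ) * diagonalQuadratic a q)
      (diagonalQuadratic fun j y => a j y * K j y) (x, Pi.single i 1) = 0) :
    pd (K i) i x = 0 := by
  have hwronskian : a i x ^ 2 * pd (K i) i x = 0 := by
    rw [poisson_const_mul_left, poisson_diagonalQuadratic_single ha fun j => (ha j).fun_mul (hK j),
      pd_mul (ha i) (hK i)] at hbracket
    linear_combination hbracket
  exact (mul_eq_zero.mp hwronskian).resolve_left (pow_ne_zero 2 hai)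

theorem weak_nonlinearity_of_poisson_commute {n : ℕ} (U : Set (Fin n → ℝ)) (hU : IsOpen U)
    (g K : Fin n → (Fin n → ℝ) → ℝ)
    (hg : ∀ i, ContDiffOn ℝ (⊤ : ℕ∞) (g i) U) (hK : ∀ i, ContDiffOn ℝ (⊤ : ℕ∞) (K i) U)
    (ε : Fin n → ℝ) (hε : ∀ i, ε i = 1 ∨ ε i = -1)
    (hbracket : ∀ x ∈ U, ∀ p : Fin n → ℝ,
      poisson
        (fun q => (1 / 2 : ℝ) * ∑ i, ε i * Real.exp (g i q.1) * (q.2 i) ^ 2)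
        (fun q => ∑ i, ε i * Real.exp (g i q.1) * K i q.1 * (q.2 i) ^ 2) (x, p) = 0) :
    ∀ i : Fin n, ∀ x ∈ U, pd (K i) i x = 0 := by
  intro i x hx
  have hdiff {f : (Fin n → ℝ) → ℝ} (hf : ContDiffOn ℝ (⊤ : ℕ∞) f U) : DifferentiableAt ℝ f x :=
    (hf.contDiffAt (hU.mem_nhds hx)).differentiableAt (by simp)
  have hεi : ε i ≠ 0 := by rcases hε i with h | h <;> simp [h]
  exact weak_nonlinearity_of_poisson_commute_general
    (fun j => (hdiff (hg j)).exp.const_mul (ε j)) (fun j => hdiff (hK j))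
    (mul_ne_zero hεi (Real.exp_ne_zero _)) (hbracket x hx (Pi.single i 1))
end

section
/- Let U ⊆ ℝⁿ be a convex open set and let K₁,…,Kₙ : U → ℝ be smooth with Kᵢ(x) ≠ Kⱼ(x) for all i ≠ j and all x ∈ U. Then the following are equivalent: (a) there exist smooth functions g₁,…,gₙ : U → ℝ such that, setting H(x,p) = (1/2)·Σᵢ exp(gᵢ(x))·pᵢ² and F(x,p) = Σᵢ exp(gᵢ(x))·Kᵢ(x)·pᵢ², one has {H,F}(x,p) = 0 for all (x,p) ∈ U × ℝⁿ; (b) for every i, (∂Kᵢ/∂xⁱ)(x) = 0 on U, and K₁,…,Kₙ satisfy the semi-Hamiltonian (Tsarev) conditions on U. -/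
/-!
Comparing the coefficients of the cubics `p_s p_i²` in `{H, F}` shows that the bracket vanishes if
and only if `∂_s K_i = (K_s - K_i) ∂_s g_i` for all `s` and `i`. For `s = i` this says
`∂_i K_i = 0`. For `s ≠ i` it prescribes every derivative of `g_i` except `∂_i g_i`, and the Tsarev
conditions say exactly that the resulting `1`-form is closed along each slice `x^i = const`; they
are therefore necessary by the symmetry of second derivatives.

Conversely, on each slice of the convex set `U` the Poincaré lemma gives a potential as an integral
along segments from a base point. A partition of unity lets the base point depend smoothly on
`x^i`, so that these potentials fit together into a smooth function on `U`.
-/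

open scoped BigOperators

/-- The semi-Hamiltonian (Tsarev) conditions for functions `K₁,…,Kₙ` on `U ⊆ ℝⁿ`. -/
def SemiHamiltonian {n : ℕ} (K : Fin n → (Fin n → ℝ) → ℝ) (U : Set (Fin n → ℝ)) : Prop :=
  ∀ i j k : Fin n, i ≠ j → j ≠ k → i ≠ k → ∀ x ∈ U,
    pd (fun y => (K j y - K i y)⁻¹ * pd (K i) j y) k x
      = pd (fun y => (K k y - K i y)⁻¹ * pd (K i) k y) j x

open Set Filter Topology MeasureTheory
open scoped ContDiff Manifold Interval

section ParametricIntegral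

theorem exists_mem_nhds_prod_subset_forall_norm_le {X Y F : Type*} [TopologicalSpace X]
    [TopologicalSpace Y] [SeminormedAddCommGroup F] {f : X × Y → F} {W : Set (X × Y)}
    (hW : IsOpen W) (hf : ContinuousOn f W) {k : Set Y} (hk : IsCompact k) {x : X}
    (hxk : {x} ×ˢ k ⊆ W) :
    ∃ s ∈ 𝓝 x, s ×ˢ k ⊆ W ∧ ∃ C, ∀ q ∈ s ×ˢ k, ‖f q‖ ≤ C := by
  have hxk_compact : IsCompact ({x} ×ˢ k) := isCompact_singleton.prod hk
  obtain ⟨T, hkT, hT, hfT⟩ :=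
    Metric.exists_isOpen_isBounded_image_of_isCompact_of_continuousOn hxk_compact hW hxk hf
  obtain ⟨u, v, hu, -, hxu, hkv, huv⟩ :=
    generalized_tube_lemma isCompact_singleton hk (hW.inter hT) (subset_inter hxk hkT)
  obtain ⟨C, hC⟩ := hfT.exists_norm_le
  have hsub : u ×ˢ k ⊆ W ∩ T := (prod_mono_right hkv).trans huv
  exact ⟨u, hu.mem_nhds (hxu rfl), hsub.trans inter_subset_left, C,
    fun q hq => hC _ (mem_image_of_mem f (hsub hq).2)⟩

theorem continuousOn_slice {X Y F : Type*} [TopologicalSpace X] [TopologicalSpace Y]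
    [TopologicalSpace F] {f : X × Y → F} {W : Set (X × Y)} (hf : ContinuousOn f W) {k : Set Y}
    {x : X} (hxk : {x} ×ˢ k ⊆ W) : ContinuousOn (fun t => f (x, t)) k :=
  hf.comp (by fun_prop) fun _ ht => hxk ⟨rfl, ht⟩

variable {E F : Type*} [NormedAddCommGroup F] {W : Set (E × ℝ)} {f : E × ℝ → F} {a b : ℝ} {x : E}

theorem eventually_aestronglyMeasurable_slice [TopologicalSpace E] (hf : ContinuousOn f W)
    {s : Set E} (hs : s ∈ 𝓝 x) (hsW : s ×ˢ [[a, b]] ⊆ W) :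
    ∀ᶠ y in 𝓝 x, AEStronglyMeasurable (fun t => f (y, t)) (volume.restrict (Ι a b)) := by
  filter_upwards [hs] with y hy
  have hy_cont : ContinuousOn (fun t => f (y, t)) [[a, b]] :=
    continuousOn_slice hf ((prod_mono_left (singleton_subset_iff.2 hy)).trans hsW)
  exact hy_cont.intervalIntegrable.def'.aestronglyMeasurable

variable [NormedSpace ℝ F]

theorem continuousAt_intervalIntegral_of_continuousOn [TopologicalSpace E]
    [FirstCountableTopology E] (hW : IsOpen W) (hf : ContinuousOn f W)
    (hx : {x} ×ˢ [[a, b]] ⊆ W) : ContinuousAt (fun y => ∫ t in a..b, f (y, t)) x := by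
  obtain ⟨s, hs, hsW, C, hC⟩ :=
    exists_mem_nhds_prod_subset_forall_norm_le hW hf isCompact_uIcc hx
  refine intervalIntegral.continuousAt_of_dominated_interval (bound := fun _ => C)
    (eventually_aestronglyMeasurable_slice hf hs hsW) ?_ intervalIntegrable_const ?_
  · filter_upwards [hs] with y hy
    exact .of_forall fun t ht => hC _ ⟨hy, uIoc_subset_uIcc ht⟩
  · refine .of_forall fun t ht => ?_
    have hxt : W ∈ 𝓝 (x, t) := hW.mem_nhds (hx ⟨rfl, uIoc_subset_uIcc ht⟩)
    exact (hf.continuousAt hxt).comp (f := fun y => (y, t)) (by fun_prop)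

variable [NormedAddCommGroup E] [NormedSpace ℝ E]

theorem hasFDerivAt_intervalIntegral_of_contDiffOn (hW : IsOpen W) (hf : ContDiffOn ℝ 1 f W)
    (hx : {x} ×ˢ [[a, b]] ⊆ W) :
    HasFDerivAt (fun y => ∫ t in a..b, f (y, t))
      (∫ t in a..b, fderiv ℝ f (x, t) ∘L .inl ℝ E ℝ) x := by
  have hf' : ContinuousOn (fun q => fderiv ℝ f q ∘L .inl ℝ E ℝ) W :=
    (hf.continuousOn_fderiv_of_isOpen hW le_rfl).clm_comp continuousOn_const
  obtain ⟨s, hs, hsW, C, hC⟩ :=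
    exists_mem_nhds_prod_subset_forall_norm_le hW hf' isCompact_uIcc hx
  refine intervalIntegral.hasFDerivAt_integral_of_dominated_of_fderiv_le
    (F' := fun y t => fderiv ℝ f (y, t) ∘L .inl ℝ E ℝ) (bound := fun _ => C) hs
    (eventually_aestronglyMeasurable_slice hf.continuousOn hs hsW)
    (continuousOn_slice hf.continuousOn hx).intervalIntegrable
    (continuousOn_slice hf' hx).intervalIntegrable.def'.aestronglyMeasurable
    (.of_forall fun t ht y hy => hC (y, t) ⟨hy, uIoc_subset_uIcc ht⟩) intervalIntegrable_const
    (.of_forall fun t ht y hy => ?_)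
  have hyt : W ∈ 𝓝 (y, t) := hW.mem_nhds (hsW ⟨hy, uIoc_subset_uIcc ht⟩)
  have hfyt : HasFDerivAt f (fderiv ℝ f (y, t)) (y, t) :=
    ((hf.contDiffAt hyt).differentiableAt one_ne_zero).hasFDerivAt
  exact hfyt.comp y (hasFDerivAt_prodMk_left y t)

theorem fderiv_intervalIntegral_apply [CompleteSpace F] (hW : IsOpen W) (hf : ContDiffOn ℝ 1 f W)
    (hx : {x} ×ˢ [[a, b]] ⊆ W) (v : E) :
    fderiv ℝ (fun y => ∫ t in a..b, f (y, t)) x v = ∫ t in a..b, fderiv ℝ f (x, t) (v, 0) := by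
  have hf' : ContinuousOn (fun q => fderiv ℝ f q ∘L .inl ℝ E ℝ) W :=
    (hf.continuousOn_fderiv_of_isOpen hW le_rfl).clm_comp continuousOn_const
  rw [(hasFDerivAt_intervalIntegral_of_contDiffOn hW hf hx).fderiv,
    ContinuousLinearMap.intervalIntegral_apply (continuousOn_slice hf' hx).intervalIntegrable]
  simp

theorem contDiffOn_intervalIntegral [FiniteDimensional ℝ E] [CompleteSpace F] {U : Set E}
    (hU : IsOpen U) (hW : IsOpen W) (hUW : U ×ˢ [[a, b]] ⊆ W) {n : ℕ∞}
    (hf : ContDiffOn ℝ n f W) : ContDiffOn ℝ n (fun y => ∫ t in a..b, f (y, t)) U := by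
  have hslice : ∀ x ∈ U, {x} ×ˢ [[a, b]] ⊆ W := fun x hx =>
    (prod_mono_left (singleton_subset_iff.2 hx)).trans hUW
  refine contDiffOn_iff_forall_nat_le.2 fun m hmn => ?_
  replace hf : ContDiffOn ℝ m f W := hf.of_le (mod_cast hmn)
  clear hmn
  induction m generalizing f with
  | zero =>
    exact contDiffOn_zero.2 fun x hx => (continuousAt_intervalIntegral_of_continuousOn hW
      hf.continuousOn (hslice x hx)).continuousWithinAt
  | succ m ih =>
    push_cast at hf ⊢
    have hf₁ : ContDiffOn ℝ 1 f W := hf.of_le le_add_self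
    refine (contDiffOn_succ_iff_fderiv_apply hU.uniqueDiffOn).2
      ⟨fun x hx => (hasFDerivAt_intervalIntegral_of_contDiffOn hW hf₁
        (hslice x hx)).differentiableAt.differentiableWithinAt, by simp, fun v => ?_⟩
    have hfv : ContDiffOn ℝ m (fun q => fderiv ℝ f q (v, 0)) W :=
      (hf.fderiv_of_isOpen hW le_rfl).clm_apply contDiffOn_const
    refine (ih hfv).congr fun x hx => ?_
    rw [fderivWithin_of_isOpen hU hx, fderiv_intervalIntegral_apply hW hf₁ (hslice x hx)]

end ParametricIntegral

section FiberwisePoincare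

variable {E B F : Type*} [NormedAddCommGroup E] [NormedSpace ℝ E] [NormedAddCommGroup B]
  [NormedSpace ℝ B] [NormedAddCommGroup F] [NormedSpace ℝ F] [CompleteSpace F]
  {π : E →L[ℝ] B} {U : Set E}

/-- Local sections of `π` through points of `U` exist because `π` has a linear right inverse; the
fibers of `π` over `U` are convex, so a smooth partition of unity glues them. -/
theorem exists_contDiffOn_rightInverse_mem [FiniteDimensional ℝ B] (hπ : Function.Surjective π)
    (hU : IsOpen U) (hconv : Convex ℝ U) :
    ∃ σ : B → E, ContDiffOn ℝ ∞ σ (π '' U) ∧ ∀ b ∈ π '' U, σ b ∈ U ∧ π (σ b) = b := by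
  obtain ⟨ρ, hρ⟩ := π.exists_rightInverse_of_surjective (LinearMap.range_eq_top.2 hπ)
  have hπρ (b : B) : π (ρ b) = b := congr($hρ b)
  let M : TopologicalSpace.Opens B :=
    ⟨π '' U, (π : E →ₗ[ℝ] B).isOpenMap_of_finiteDimensional hπ U hU⟩
  have : LocallyCompactSpace M := M.isOpen.locallyCompactSpace
  have hfiber_convex (b : M) : Convex ℝ (U ∩ π ⁻¹' {(b : B)}) :=
    hconv.inter ((convex_singleton _).is_linear_preimage π.isBoundedLinearMap.toIsLinearMap)
  obtain ⟨s, hs⟩ : ∃ s : C^∞⟮𝓘(ℝ, B), M; 𝓘(ℝ, E), E⟯, ∀ b : M, s b ∈ U ∩ π ⁻¹' {(b : B)} := by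
    refine exists_contMDiffMap_forall_mem_convex_of_local 𝓘(ℝ, B) hfiber_convex ?_
    rintro ⟨-, x, hx, rfl⟩
    have hlocal : ContDiff ℝ ∞ fun b => x + ρ (b - π x) := by fun_prop
    refine ⟨(fun b : M => x + ρ (b - π x)) ⁻¹' U, ?_, _,
      (hlocal.contMDiff.comp contMDiff_subtype_val).contMDiffOn, fun b hb => ⟨hb, ?_⟩⟩
    · refine (hU.preimage (hlocal.continuous.comp continuous_subtype_val)).mem_nhds ?_
      simpa using hx
    · simp [hπρ]
  have hextend (b : M) : Function.extend (↑) s (0 : B → E) b = s b :=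
    Subtype.val_injective.extend_apply s 0 b
  refine ⟨Function.extend (↑) s 0, fun b hb => ?_, fun b hb => ?_⟩
  · refine (contMDiffAt_iff_contDiffAt.1
      ((contMDiffAt_subtype_iff (x := (⟨b, hb⟩ : M))).1 ?_)).contDiffWithinAt
    simpa only [hextend] using s.contMDiff.contMDiffAt
  · rw [hextend ⟨b, hb⟩]
    exact hs ⟨b, hb⟩

theorem tangentConeAt_inter_fiber {x : E} (hU : U ∈ 𝓝 x) :
    tangentConeAt ℝ (U ∩ π ⁻¹' {π x}) x = {v | π v = 0} := by
  rw [inter_comm, tangentConeAt_inter_nhds hU]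
  refine Subset.antisymm (fun v hv => ?_) fun v hv => ?_
  · have hconst : HasFDerivWithinAt π (0 : E →L[ℝ] B) (π ⁻¹' {π x}) x :=
      (hasFDerivWithinAt_const (π x) x _).congr (fun _ hy => hy) rfl
    exact π.hasFDerivWithinAt.unique_on hconst hv
  · have hfiber : Convex ℝ (π ⁻¹' {π x}) :=
      (convex_singleton _).is_linear_preimage π.isBoundedLinearMap.toIsLinearMap
    have hxv : x + v ∈ π ⁻¹' {π x} := by simpa using hv
    simpa using mem_tangentConeAt_of_segment_subset (hfiber.segment_subset rfl hxv)

theorem contDiffOn_curveIntegral_segment [FiniteDimensional ℝ E] (hU : IsOpen U)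
    (hconv : Convex ℝ U) {n : ℕ∞} {θ : E → E →L[ℝ] F} (hθ : ContDiffOn ℝ n θ U) {c : E → E}
    (hc : ContDiffOn ℝ n c U) (hcU : MapsTo c U U) :
    ContDiffOn ℝ n (fun x => ∫ᶜ y in .segment (c x) x, θ y) U := by
  simp only [curveIntegral_segment]
  let γ : E × ℝ → E := fun q => AffineMap.lineMap (c q.1) q.1 q.2
  have hc_fst : ContDiffOn ℝ n (fun q : E × ℝ => c q.1) (U ×ˢ univ) :=
    hc.comp contDiffOn_fst fun _ hq => hq.1
  have hγ : ContDiffOn ℝ n γ (U ×ˢ univ) := by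
    simp only [γ, AffineMap.lineMap_apply_module']
    exact (contDiffOn_snd.smul (contDiffOn_fst.sub hc_fst)).add hc_fst
  have hW : IsOpen (U ×ˢ univ ∩ γ ⁻¹' U) :=
    hγ.continuousOn.isOpen_inter_preimage (hU.prod isOpen_univ) hU
  refine contDiffOn_intervalIntegral hU hW (f := fun q => θ (γ q) (q.1 - c q.1)) ?_ ?_
  · rintro ⟨x, t⟩ ⟨hx, ht⟩
    rw [uIcc_of_le zero_le_one] at ht
    exact ⟨⟨hx, trivial⟩, hconv.lineMap_mem (hcU hx) hx ht⟩
  · exact (hθ.comp (hγ.mono inter_subset_left) fun q hq => hq.2).clm_apply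
      (contDiffOn_fst.sub (hc_fst.mono inter_subset_left))

/-- The potential at `x` is the integral of `θ` along the segment to `x` from a base point in its
fiber. On a single fiber the base point is constant, so the Poincaré lemma applies there, while the
smooth choice of base points makes the potential smooth across the fibers. -/
theorem exists_contDiffOn_fderiv_eq_on_ker [FiniteDimensional ℝ E] (hπ : Function.Surjective π)
    (hU : IsOpen U) (hconv : Convex ℝ U) {θ : E → E →L[ℝ] F} (hθ : ContDiffOn ℝ ∞ θ U)
    (hsymm : ∀ x ∈ U, ∀ v w, π v = 0 → π w = 0 → fderiv ℝ θ x v w = fderiv ℝ θ x w v) :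
    ∃ g : E → F, ContDiffOn ℝ ∞ g U ∧ ∀ x ∈ U, ∀ v, π v = 0 → fderiv ℝ g x v = θ x v := by
  have : FiniteDimensional ℝ B := Module.Finite.of_surjective (π : E →ₗ[ℝ] B) hπ
  obtain ⟨σ, hσ, hσU⟩ := exists_contDiffOn_rightInverse_mem hπ hU hconv
  have hbase (x) (hx : x ∈ U) : σ (π x) ∈ U ∧ π (σ (π x)) = π x := hσU _ (mem_image_of_mem π hx)
  have hg : ContDiffOn ℝ ∞ (fun x => ∫ᶜ y in .segment (σ (π x)) x, θ y) U :=
    contDiffOn_curveIntegral_segment hU hconv hθ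
      (hσ.comp π.contDiff.contDiffOn (mapsTo_image π U)) fun x hx => (hbase x hx).1
  refine ⟨_, hg, fun x hx v hv => ?_⟩
  let S : Set E := U ∩ π ⁻¹' {π x}
  have hS : Convex ℝ S :=
    hconv.inter ((convex_singleton _).is_linear_preimage π.isBoundedLinearMap.toIsLinearMap)
  have hθ' (y) (hy : y ∈ S) : HasFDerivWithinAt θ (fderiv ℝ θ y) S y :=
    ((hθ.contDiffAt (hU.mem_nhds hy.1)).differentiableAt
      (by simp)).hasFDerivAt.hasFDerivWithinAt
  have htangent (y) (hy : y ∈ S) : tangentConeAt ℝ S y = {v | π v = 0} := by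
    rw [← tangentConeAt_inter_fiber (hU.mem_nhds hy.1), hy.2]
  have hgS : HasFDerivWithinAt (fun x => ∫ᶜ y in .segment (σ (π x)) x, θ y) (θ x) S x := by
    refine (hS.hasFDerivWithinAt_curveIntegral_segment_of_hasFDerivWithinAt_symmetric hθ'
      (fun y hy u hu w hw => ?_) (hbase x hx) ⟨hx, rfl⟩).congr (fun y hy => ?_) rfl
    · rw [htangent y hy] at hu hw
      exact hsymm y hy.1 u w hu hw
    · rw [show π y = π x from hy.2]
  have hgx := (hg.contDiffAt (hU.mem_nhds hx)).differentiableAt (by simp)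
  exact hgx.hasFDerivAt.hasFDerivWithinAt.unique_on hgS (htangent x ⟨hx, rfl⟩ ▸ hv)

end FiberwisePoincare

section PartialDerivatives

variable {n : ℕ} {U : Set (Fin n → ℝ)} {f g : (Fin n → ℝ) → ℝ} {x : Fin n → ℝ}

theorem contDiffOn_pd {m k : ℕ∞ω} (hU : IsOpen U) (hf : ContDiffOn ℝ m f U) (hk : k + 1 ≤ m)
    (j : Fin n) : ContDiffOn ℝ k (pd f j) U :=
  (hf.fderiv_of_isOpen hU hk).clm_apply contDiffOn_const

theorem pd_congr (h : f =ᶠ[𝓝 x] g) (j : Fin n) : pd f j x = pd g j x := by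
  rw [pd, pd, h.fderiv_eq]

theorem pd_pd_comm (hf : ContDiffAt ℝ 2 f x) (j k : Fin n) :
    pd (pd f j) k x = pd (pd f k) j x := by
  have hf' : DifferentiableAt ℝ (fderiv ℝ f) x :=
    (hf.fderiv_right (m := 1) (by norm_num)).differentiableAt one_ne_zero
  have hpd (a b : Fin n) :
      pd (pd f a) b x = fderiv ℝ (fderiv ℝ f) x (Pi.single b 1) (Pi.single a 1) := by
    change fderiv ℝ (fun y => fderiv ℝ f y (Pi.single a 1)) x (Pi.single b 1) = _
    simp [fderiv_clm_apply hf' (differentiableAt_const _)]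
  rw [hpd, hpd]
  exact hf.isSymmSndFDerivAt (by simp) _ _

theorem fderiv_apply_eq_sum_pd (v : Fin n → ℝ) : fderiv ℝ f x v = ∑ k, v k * pd f k x := by
  conv_lhs => rw [pi_eq_sum_univ' v]
  simp [pd]

theorem fderiv_sum_smul_proj_apply {t : Finset (Fin n)} {Γ : Fin n → (Fin n → ℝ) → ℝ}
    (hΓ : ∀ j ∈ t, DifferentiableAt ℝ (Γ j) x) (v w : Fin n → ℝ) :
    fderiv ℝ (fun y => ∑ j ∈ t, Γ j y • (.proj j : (Fin n → ℝ) →L[ℝ] ℝ)) x v w =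
      ∑ j ∈ t, ∑ k, v k * w j * pd (Γ j) k x := by
  rw [(HasFDerivAt.fun_sum fun j hj => (hΓ j hj).hasFDerivAt.smul_const
    (.proj j : (Fin n → ℝ) →L[ℝ] ℝ)).fderiv]
  simp only [sum_apply, ContinuousLinearMap.smulRight_apply, smul_apply,
    ContinuousLinearMap.proj_apply, smul_eq_mul, fderiv_apply_eq_sum_pd v, Finset.sum_mul]
  exact Finset.sum_congr rfl fun j _ => Finset.sum_congr rfl fun k _ => by ring

theorem exists_contDiffOn_pd_eq_of_ne (hU : IsOpen U) (hconv : Convex ℝ U) (i : Fin n)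
    {Γ : Fin n → (Fin n → ℝ) → ℝ} (hΓ : ∀ j ≠ i, ContDiffOn ℝ ∞ (Γ j) U)
    (hclosed : ∀ j ≠ i, ∀ k ≠ i, ∀ x ∈ U, pd (Γ j) k x = pd (Γ k) j x) :
    ∃ g : (Fin n → ℝ) → ℝ, ContDiffOn ℝ ∞ g U ∧ ∀ j ≠ i, ∀ x ∈ U, pd g j x = Γ j x := by
  let θ : (Fin n → ℝ) → (Fin n → ℝ) →L[ℝ] ℝ := fun x =>
    ∑ j ∈ Finset.univ.erase i, Γ j x • ContinuousLinearMap.proj j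
  have hθ : ContDiffOn ℝ ∞ θ U :=
    ContDiffOn.sum fun j hj => (hΓ j (Finset.ne_of_mem_erase hj)).smul contDiffOn_const
  have hθ' (x) (hx : x ∈ U) (v w : Fin n → ℝ) (hv : v i = 0) : fderiv ℝ θ x v w =
      ∑ j ∈ Finset.univ.erase i, ∑ k ∈ Finset.univ.erase i, v k * w j * pd (Γ j) k x := by
    rw [fderiv_sum_smul_proj_apply fun j hj =>
      ((hΓ j (Finset.ne_of_mem_erase hj)).contDiffAt (hU.mem_nhds hx)).differentiableAt (by simp)]
    exact Finset.sum_congr rfl fun j _ => (Finset.sum_erase _ (by simp [hv])).symm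
  have hsymm (x) (hx : x ∈ U) (v w : Fin n → ℝ) (hv : v i = 0) (hw : w i = 0) :
      fderiv ℝ θ x v w = fderiv ℝ θ x w v := by
    rw [hθ' x hx v w hv, hθ' x hx w v hw, Finset.sum_comm]
    refine Finset.sum_congr rfl fun j hj => Finset.sum_congr rfl fun k hk => ?_
    rw [hclosed k (Finset.ne_of_mem_erase hk) j (Finset.ne_of_mem_erase hj) x hx]
    ring
  obtain ⟨g, hg, hgθ⟩ := exists_contDiffOn_fderiv_eq_on_ker
    (π := (ContinuousLinearMap.proj i : (Fin n → ℝ) →L[ℝ] ℝ)) (Function.surjective_eval i)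
    hU hconv hθ hsymm
  refine ⟨g, hg, fun j hj x hx => ?_⟩
  rw [pd, hgθ x hx (Pi.single j 1) (Pi.single_eq_of_ne' hj _)]
  simp [θ, Pi.single_apply, hj]

end PartialDerivatives

section PoissonBracket

theorem eq_zero_of_forall_sum_mul_sq_eq_zero {R ι : Type*} [CommRing R] [NoZeroDivisors R]
    [NeZero (2 : R)] [Fintype ι] {A : ι → ι → R}
    (h : ∀ p : ι → R, ∑ s, ∑ i, A s i * (p s * p i ^ 2) = 0) (s i : ι) : A s i = 0 := by
  classical
  have hdiag (s : ι) : A s s = 0 := by simpa [Pi.single_apply, ite_pow] using h (Pi.single s 1)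
  by_cases hsi : s = i
  · rw [← hsi, hdiag]
  have hpair (ε : R) (hε : ε ^ 2 = 1) : A s i + ε * A i s = 0 := by
    let p : ι → R := Pi.single s 1 + Pi.single i ε
    have hp_sq (k : ι) : p k ^ 2 = (Pi.single s 1 + Pi.single i 1 : ι → R) k := by
      by_cases hks : k = s <;> by_cases hki : k = i <;> simp_all [p]
    have hp := h p
    simp only [hp_sq] at hp
    have hsum : A i s * ε + A s i = 0 := by
      simpa [p, Pi.single_apply, add_mul, mul_add, Finset.sum_add_distrib, hdiag] using hp
    linear_combination hsum
  have htwo : 2 * A s i = 0 := by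
    linear_combination hpair 1 (one_pow 2) + hpair (-1) neg_one_sq
  exact (mul_eq_zero.1 htwo).resolve_left two_ne_zero

variable {n : ℕ}

/-- The function `(x, p) ↦ ∑ᵢ aᵢ(x) pᵢ²` on phase space, quadratic and diagonal in the momenta:
both Hamiltonians of the theorem are of this form. -/
def diagonalForm (a : Fin n → (Fin n → ℝ) → ℝ) (q : (Fin n → ℝ) × (Fin n → ℝ)) : ℝ :=
  ∑ i, a i q.1 * q.2 i ^ 2

variable {a b : Fin n → (Fin n → ℝ) → ℝ} {x : Fin n → ℝ}

theorem hasFDerivAt_diagonalForm (ha : ∀ i, DifferentiableAt ℝ (a i) x) (p : Fin n → ℝ) :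
    HasFDerivAt (diagonalForm a)
      (∑ i, (a i x • (2 * p i) • (.proj i ∘L .snd ℝ (Fin n → ℝ) (Fin n → ℝ)) +
        p i ^ 2 • (fderiv ℝ (a i) x ∘L .fst ℝ (Fin n → ℝ) (Fin n → ℝ)))) (x, p) := by
  refine HasFDerivAt.fun_sum fun i _ => ?_
  have hcoeff : HasFDerivAt (fun q : (Fin n → ℝ) × (Fin n → ℝ) => a i q.1)
      (fderiv ℝ (a i) x ∘L .fst ℝ _ _) (x, p) :=
    (ha i).hasFDerivAt.comp (x, p) hasFDerivAt_fst
  have hmomentum : HasFDerivAt (fun q : (Fin n → ℝ) × (Fin n → ℝ) => q.2 i)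
      (.proj i ∘L .snd ℝ _ _) (x, p) :=
    (ContinuousLinearMap.proj i ∘L .snd ℝ (Fin n → ℝ) (Fin n → ℝ)).hasFDerivAt
  simpa using hcoeff.fun_mul (hmomentum.pow 2)

theorem fderiv_diagonalForm_position (ha : ∀ i, DifferentiableAt ℝ (a i) x) (p : Fin n → ℝ)
    (s : Fin n) :
    fderiv ℝ (diagonalForm a) (x, p) (Pi.single s 1, 0) = ∑ i, pd (a i) s x * p i ^ 2 := by
  simp [(hasFDerivAt_diagonalForm ha p).fderiv, pd, mul_comm]

theorem fderiv_diagonalForm_momentum (ha : ∀ i, DifferentiableAt ℝ (a i) x) (p : Fin n → ℝ)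
    (s : Fin n) : fderiv ℝ (diagonalForm a) (x, p) (0, Pi.single s 1) = 2 * a s x * p s := by
  simp [(hasFDerivAt_diagonalForm ha p).fderiv, Pi.single_apply, mul_left_comm, mul_assoc]

theorem poisson_diagonalForm (ha : ∀ i, DifferentiableAt ℝ (a i) x)
    (hb : ∀ i, DifferentiableAt ℝ (b i) x) (p : Fin n → ℝ) :
    poisson (fun q => 1 / 2 * diagonalForm a q) (diagonalForm b) (x, p) =
      ∑ s, ∑ i, (a s x * pd (b i) s x - b s x * pd (a i) s x) * (p s * p i ^ 2) := by
  have hhalf : fderiv ℝ (fun q => 1 / 2 * diagonalForm a q) (x, p) =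
      (1 / 2 : ℝ) • fderiv ℝ (diagonalForm a) (x, p) :=
    fderiv_const_mul (hasFDerivAt_diagonalForm ha p).differentiableAt _
  refine Finset.sum_congr rfl fun s _ => ?_
  simp only [hhalf, smul_apply, smul_eq_mul,
    fderiv_diagonalForm_position ha, fderiv_diagonalForm_momentum ha,
    fderiv_diagonalForm_position hb, fderiv_diagonalForm_momentum hb]
  simp only [Finset.mul_sum, Finset.sum_mul, ← Finset.sum_sub_distrib]
  exact Finset.sum_congr rfl fun i _ => by ring

theorem forall_poisson_diagonalForm_eq_zero_iff (ha : ∀ i, DifferentiableAt ℝ (a i) x)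
    (hb : ∀ i, DifferentiableAt ℝ (b i) x) :
    (∀ p, poisson (fun q => 1 / 2 * diagonalForm a q) (diagonalForm b) (x, p) = 0) ↔
      ∀ s i, a s x * pd (b i) s x = b s x * pd (a i) s x := by
  simp only [poisson_diagonalForm ha hb]
  refine ⟨fun h s i => sub_eq_zero.1 (eq_zero_of_forall_sum_mul_sq_eq_zero h s i),
    fun h p => ?_⟩
  simp [h]

variable {g K : Fin n → (Fin n → ℝ) → ℝ}

theorem forall_poisson_exp_eq_zero_iff (hg : ∀ i, DifferentiableAt ℝ (g i) x)
    (hK : ∀ i, DifferentiableAt ℝ (K i) x) :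
    (∀ p : Fin n → ℝ,
      poisson (fun q => (1 / 2 : ℝ) * ∑ i, Real.exp (g i q.1) * (q.2 i) ^ 2)
        (fun q => ∑ i, Real.exp (g i q.1) * K i q.1 * (q.2 i) ^ 2) (x, p) = 0) ↔
      ∀ s i, pd (K i) s x = (K s x - K i x) * pd (g i) s x := by
  have hexp (i s : Fin n) :
      pd (fun y => Real.exp (g i y)) s x = Real.exp (g i x) * pd (g i) s x := by
    simp [pd, fderiv_exp (hg i)]
  have hexp_mul (i s : Fin n) : pd (fun y => Real.exp (g i y) * K i y) s x =
      Real.exp (g i x) * (pd (K i) s x + K i x * pd (g i) s x) := by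
    rw [pd, fderiv_fun_mul (hg i).exp (hK i)]
    simp only [add_apply, smul_apply, smul_eq_mul, ← pd.eq_1, hexp]
    ring
  refine (forall_poisson_diagonalForm_eq_zero_iff (fun i => (hg i).exp)
    fun i => (hg i).exp.fun_mul (hK i)).trans (forall₂_congr fun s i => ?_)
  have hne : Real.exp (g s x) * Real.exp (g i x) ≠ 0 := by positivity
  rw [hexp, hexp_mul, ← mul_right_inj' hne (b := pd (K i) s x)]
  constructor <;> intro h <;> linear_combination h

end PoissonBracket

section Tsarev

variable {n : ℕ} {U : Set (Fin n → ℝ)} {K : Fin n → (Fin n → ℝ) → ℝ}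

theorem semiHamiltonian_of_pd_eq_sub_mul_pd (hU : IsOpen U)
    (hdist : ∀ i j : Fin n, i ≠ j → ∀ x ∈ U, K i x ≠ K j x) {g : Fin n → (Fin n → ℝ) → ℝ}
    (hg : ∀ i, ContDiffOn ℝ 2 (g i) U)
    (hKg : ∀ x ∈ U, ∀ s i, pd (K i) s x = (K s x - K i x) * pd (g i) s x) :
    SemiHamiltonian K U := by
  intro i j k hij _ hik x hx
  have hpd (s) (his : i ≠ s) : (fun y => (K s y - K i y)⁻¹ * pd (K i) s y) =ᶠ[𝓝 x] pd (g i) s := by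
    filter_upwards [hU.mem_nhds hx] with y hy
    rw [hKg y hy s i, inv_mul_cancel_left₀ (sub_ne_zero.2 (hdist i s his y hy).symm)]
  rw [pd_congr (hpd j hij), pd_congr (hpd k hik)]
  exact pd_pd_comm ((hg i).contDiffAt (hU.mem_nhds hx)) j k

theorem SemiHamiltonian.exists_contDiffOn_pd_eq_sub_mul_pd (hSH : SemiHamiltonian K U)
    (hU : IsOpen U) (hconv : Convex ℝ U) (hK : ∀ i, ContDiffOn ℝ ∞ (K i) U)
    (hdist : ∀ i j : Fin n, i ≠ j → ∀ x ∈ U, K i x ≠ K j x) (i : Fin n) :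
    ∃ g : (Fin n → ℝ) → ℝ, ContDiffOn ℝ ∞ g U ∧
      ∀ s ≠ i, ∀ x ∈ U, pd (K i) s x = (K s x - K i x) * pd g s x := by
  have hsub (s) (hs : s ≠ i) (x) (hx : x ∈ U) : K s x - K i x ≠ 0 :=
    sub_ne_zero.2 (hdist s i hs x hx)
  let Γ (s : Fin n) (x : Fin n → ℝ) : ℝ := (K s x - K i x)⁻¹ * pd (K i) s x
  have hΓ (s) (hs : s ≠ i) : ContDiffOn ℝ ∞ (Γ s) U :=
    (((hK s).sub (hK i)).inv (hsub s hs)).mul (contDiffOn_pd hU (hK i) (by simp) s)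
  have hclosed (j) (hj : j ≠ i) (k) (hk : k ≠ i) (x) (hx : x ∈ U) :
      pd (Γ j) k x = pd (Γ k) j x := by
    obtain rfl | hjk := eq_or_ne j k
    · rfl
    · exact hSH i j k hj.symm hjk hk.symm x hx
  obtain ⟨g, hg, hgΓ⟩ := exists_contDiffOn_pd_eq_of_ne hU hconv i hΓ hclosed
  refine ⟨g, hg, fun s hs x hx => ?_⟩
  rw [hgΓ s hs x hx, mul_inv_cancel_left₀ (hsub s hs x hx)]

end Tsarev

theorem exists_metric_iff_weaklyNonlinear_and_semiHamiltonian
    {n : ℕ} (U : Set (Fin n → ℝ)) (hU : IsOpen U) (hconv : Convex ℝ U)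
    (K : Fin n → (Fin n → ℝ) → ℝ)
    (hK : ∀ i, ContDiffOn ℝ (⊤ : ℕ∞) (K i) U)
    (hdist : ∀ i j : Fin n, i ≠ j → ∀ x ∈ U, K i x ≠ K j x) :
    (∃ g : Fin n → (Fin n → ℝ) → ℝ, (∀ i, ContDiffOn ℝ (⊤ : ℕ∞) (g i) U) ∧
      ∀ x ∈ U, ∀ p : Fin n → ℝ,
        poisson
          (fun q => (1 / 2 : ℝ) * ∑ i, Real.exp (g i q.1) * (q.2 i) ^ 2)
          (fun q => ∑ i, Real.exp (g i q.1) * K i q.1 * (q.2 i) ^ 2) (x, p) = 0)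
    ↔ ((∀ i : Fin n, ∀ x ∈ U, pd (K i) i x = 0) ∧ SemiHamiltonian K U) := by
  have hdiff {f : Fin n → (Fin n → ℝ) → ℝ} (hf : ∀ i, ContDiffOn ℝ ∞ (f i) U) (x) (hx : x ∈ U)
      (i : Fin n) : DifferentiableAt ℝ (f i) x :=
    ((hf i).contDiffAt (hU.mem_nhds hx)).differentiableAt (by simp)
  constructor
  · rintro ⟨g, hg, hHF⟩
    have hKg (x) (hx : x ∈ U) : ∀ s i, pd (K i) s x = (K s x - K i x) * pd (g i) s x :=
      (forall_poisson_exp_eq_zero_iff (hdiff hg x hx) (hdiff hK x hx)).1 (hHF x hx)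
    exact ⟨fun i x hx => by simp [hKg x hx i i],
      semiHamiltonian_of_pd_eq_sub_mul_pd hU hdist (fun i => contDiffOn_infty.1 (hg i) 2) hKg⟩
  · rintro ⟨hweak, hSH⟩
    choose g hg hKg using hSH.exists_contDiffOn_pd_eq_sub_mul_pd hU hconv hK hdist
    refine ⟨g, hg, fun x hx => ?_⟩
    refine (forall_poisson_exp_eq_zero_iff (hdiff hg x hx) (hdiff hK x hx)).2 fun s i => ?_
    obtain rfl | hsi := eq_or_ne s i
    · simp [hweak s x hx]
    · exact hKg i s hsi x hx
end
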